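/- arXiv:2203.11434 — 8 statements merged into one kernel-verified Lean document; each statement's English description precedes it below -/
import Mathlib

section
/- Merging two bins cannot increase the Funk distance: let p, q ∈ Δ_{d+1} (points with positive coordinates p_0, p_1, …, p_d summing to 1), and define the coarse-grained points p̃ := (p_0 + p_1, p_2, …, p_d) ∈ Δ_d and q̃ := (q_0 + q_1, q_2, …, q_d) ∈ Δ_d. Then 0 ≤ ρ_FD(p̃, q̃) ≤ ρ_FD(p, q). -/
/-- The open standard simplex: all coordinates positive and summing to 1. -/
def stdSimplexOpen {d : ℕ} (p : Fin d → ℝ) : Prop :=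
  (∀ i, 0 < p i) ∧ ∑ i, p i = 1

/-- The Funk distance ρ_FD(p,q) = log max_i (p_i / q_i). -/
noncomputable def funkDist {d : ℕ} (p q : Fin d → ℝ) : ℝ :=
  Real.log (⨆ i, p i / q i)

/-- Merging the first two bins of a point of the simplex. -/
def mergeBins {d : ℕ} (p : Fin (d + 2) → ℝ) : Fin (d + 1) → ℝ :=
  Fin.cons (p 0 + p 1) (fun i : Fin d => p i.succ.succ)

/-!
The supremum of the ratios `p i / q i` is the least `c` with `p ≤ c • q`, and a monotone,
positively homogeneous map `T` turns `p ≤ c • q` into `T p ≤ c • T q`. Merging bins is such a map.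
It also preserves total mass, and two vectors of equal mass have some ratio at least `1`, so the
logarithms are nonnegative.
-/

section RatioSupremum

variable {ι κ : Type*} {p q : ι → ℝ}

theorem le_iSup_div_smul [Finite ι] (hq : ∀ i, 0 < q i) : p ≤ (⨆ i, p i / q i) • q :=
  fun i => (div_le_iff₀ (hq i)).1 (Finite.le_ciSup (fun i => p i / q i) i)

theorem iSup_div_le_of_le_smul [Nonempty ι] {c : ℝ} (hq : ∀ i, 0 < q i) (h : p ≤ c • q) :
    ⨆ i, p i / q i ≤ c :=
  ciSup_le fun i => (div_le_iff₀ (hq i)).2 (h i)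

theorem one_le_iSup_div_of_sum_le [Fintype ι] [Nonempty ι] (hq : ∀ i, 0 < q i)
    (hpq : ∑ i, q i ≤ ∑ i, p i) : 1 ≤ ⨆ i, p i / q i := by
  obtain ⟨i, -, hi⟩ := Finset.exists_le_of_sum_le Finset.univ_nonempty hpq
  exact Finite.le_ciSup_of_le i ((one_le_div (hq i)).2 hi)

theorem iSup_div_map_le_iSup_div [Finite ι] [Nonempty κ] {T : (ι → ℝ) → κ → ℝ}
    (hT : Monotone T) (hT_smul : ∀ c : ℝ, 0 < c → ∀ x, T (c • x) = c • T x)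
    (hq : ∀ i, 0 < q i) (hTq : ∀ j, 0 < T q j) (hpos : 0 < ⨆ i, p i / q i) :
    ⨆ j, T p j / T q j ≤ ⨆ i, p i / q i :=
  iSup_div_le_of_le_smul hTq <|
    calc T p ≤ T ((⨆ i, p i / q i) • q) := hT (le_iSup_div_smul hq)
      _ = (⨆ i, p i / q i) • T q := hT_smul _ hpos q

end RatioSupremum

theorem funkDist_nonneg {d : ℕ} [NeZero d] {p q : Fin d → ℝ} (hq : ∀ i, 0 < q i)
    (hpq : ∑ i, q i ≤ ∑ i, p i) : 0 ≤ funkDist p q :=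
  Real.log_nonneg (one_le_iSup_div_of_sum_le hq hpq)

theorem funkDist_mergeBins_le_general {m n : ℕ} [NeZero m] [NeZero n]
    {T : (Fin m → ℝ) → Fin n → ℝ} (hT : Monotone T)
    (hT_smul : ∀ c : ℝ, 0 < c → ∀ x, T (c • x) = c • T x)
    (hT_sum : ∀ x, ∑ j, T x j = ∑ i, x i) {p q : Fin m → ℝ}
    (hq : ∀ i, 0 < q i) (hTq : ∀ j, 0 < T q j) (hpq : ∑ i, q i ≤ ∑ i, p i) :
    0 ≤ funkDist (T p) (T q) ∧ funkDist (T p) (T q) ≤ funkDist p q := by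
  have hTpq : ∑ j, T q j ≤ ∑ j, T p j := by simpa only [hT_sum] using hpq
  have hpos : 0 < ⨆ i, p i / q i := one_pos.trans_le (one_le_iSup_div_of_sum_le hq hpq)
  have hTpos : 0 < ⨆ j, T p j / T q j := one_pos.trans_le (one_le_iSup_div_of_sum_le hTq hTpq)
  exact ⟨funkDist_nonneg hTq hTpq,
    Real.log_le_log hTpos (iSup_div_map_le_iSup_div hT hT_smul hq hTq hpos)⟩

section MergeBins

variable {d : ℕ}

theorem mergeBins_zero (p : Fin (d + 2) → ℝ) : mergeBins p 0 = p 0 + p 1 := rfl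

theorem mergeBins_succ (p : Fin (d + 2) → ℝ) (i : Fin d) :
    mergeBins p i.succ = p i.succ.succ := rfl

theorem monotone_mergeBins : Monotone (mergeBins (d := d)) := fun _ _ h =>
  Fin.cases (add_le_add (h 0) (h 1)) fun i => h i.succ.succ

theorem mergeBins_smul (c : ℝ) (p : Fin (d + 2) → ℝ) : mergeBins (c • p) = c • mergeBins p :=
  funext <| Fin.cases (mul_add c (p 0) (p 1)).symm fun _ => rfl

theorem mergeBins_pos {p : Fin (d + 2) → ℝ} (hp : ∀ i, 0 < p i) : ∀ i, 0 < mergeBins p i :=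
  Fin.cases (add_pos (hp 0) (hp 1)) fun i => hp i.succ.succ

theorem sum_mergeBins (p : Fin (d + 2) → ℝ) : ∑ i, mergeBins p i = ∑ i, p i := by
  simp only [Fin.sum_univ_succ, mergeBins_zero, mergeBins_succ, Fin.succ_zero_eq_one, add_assoc]

end MergeBins

/-- Merging two bins cannot increase the Funk distance: if `p̃, q̃` are obtained from
`p, q ∈ Δ_{d+1}` by merging their first two coordinates, then
`0 ≤ ρ_FD(p̃, q̃) ≤ ρ_FD(p, q)`. -/
theorem funkDist_mergeBins_le {d : ℕ} (p q : Fin (d + 2) → ℝ)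
    (hp : stdSimplexOpen p) (hq : stdSimplexOpen q) :
    0 ≤ funkDist (mergeBins p) (mergeBins q) ∧
      funkDist (mergeBins p) (mergeBins q) ≤ funkDist p q :=
  funkDist_mergeBins_le_general monotone_mergeBins (fun c _ => mergeBins_smul c) sum_mergeBins
    hq.1 (mergeBins_pos hq.1) (hq.2.trans hp.2.symm).le
end

section
/- Information monotonicity of the Funk distance: let X = {X_1, …, X_m} be a partition of {1, …, d} into m ≤ d nonempty pairwise disjoint subsets, and for p ∈ Δ_d let p_{|X} ∈ Δ_m denote the coarse-grained point with i-th coordinate ∑_{j ∈ X_i} p_j. Then for all p, q ∈ Δ_d, ρ_FD(p_{|X}, q_{|X}) ≤ ρ_FD(p, q). -/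
/-!
The coordinatewise description `funkDist p q ≤ r ↔ p ≤ exp r • q` makes monotonicity immediate:
the inequalities `p j ≤ exp (funkDist p q) * q j` may be added up over each block `X i`.
-/

theorem funkDist_le_iff {d : ℕ} {p q : Fin d → ℝ} {r : ℝ} (hp : ∃ i, 0 < p i)
    (hq : ∀ i, 0 < q i) : funkDist p q ≤ r ↔ ∀ i, p i ≤ Real.exp r * q i := by
  obtain ⟨k, hk⟩ := hp
  have : Nonempty (Fin d) := ⟨k⟩
  have hbdd : BddAbove (Set.range fun i => p i / q i) := Finite.bddAbove_range _
  have hsup : 0 < ⨆ i, p i / q i := (lt_ciSup_iff hbdd).2 ⟨k, div_pos hk (hq k)⟩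
  calc funkDist p q ≤ r
      ↔ ⨆ i, p i / q i ≤ Real.exp r := Real.log_le_iff_le_exp hsup
    _ ↔ ∀ i, p i / q i ≤ Real.exp r := ciSup_le_iff hbdd
    _ ↔ ∀ i, p i ≤ Real.exp r * q i := forall_congr' fun i => div_le_iff₀ (hq i)

theorem le_exp_funkDist_mul {d : ℕ} (p : Fin d → ℝ) {q : Fin d → ℝ} (hq : ∀ i, 0 < q i)
    (i : Fin d) : p i ≤ Real.exp (funkDist p q) * q i := by
  rcases le_or_gt (p i) 0 with hi | hi
  · exact hi.trans (mul_nonneg (Real.exp_nonneg _) (hq i).le)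
  · exact (funkDist_le_iff ⟨i, hi⟩ hq).1 le_rfl i

theorem funkDist_information_monotone_general {d m : ℕ} {X : Fin m → Finset (Fin d)}
    (hne : ∀ i, (X i).Nonempty) {p q : Fin d → ℝ} (hp : ∃ i, 0 < ∑ j ∈ X i, p j)
    (hq : ∀ j, 0 < q j) :
    funkDist (fun i => ∑ j ∈ X i, p j) (fun i => ∑ j ∈ X i, q j) ≤ funkDist p q := by
  have hq_sum : ∀ i, 0 < ∑ j ∈ X i, q j := fun i => Finset.sum_pos (fun j _ => hq j) (hne i)
  refine (funkDist_le_iff hp hq_sum).2 fun i => ?_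
  calc ∑ j ∈ X i, p j
      ≤ ∑ j ∈ X i, Real.exp (funkDist p q) * q j :=
        Finset.sum_le_sum fun j _ => le_exp_funkDist_mul p hq j
    _ = Real.exp (funkDist p q) * ∑ j ∈ X i, q j := (Finset.mul_sum ..).symm

/-- Information monotonicity of the Funk distance: coarse-graining a point of the simplex
according to a partition `X` of the coordinates into `m ≤ d` nonempty pairwise disjoint
subsets cannot increase the Funk distance. -/
theorem funkDist_information_monotone {d m : ℕ} (hd : 0 < d) (hm : 0 < m) (hmd : m ≤ d)
    (X : Fin m → Finset (Fin d))
    (hne : ∀ i, (X i).Nonempty)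
    (hdisj : ∀ i j, i ≠ j → Disjoint (X i) (X j))
    (hcover : ∀ k : Fin d, ∃ i, k ∈ X i)
    (p q : Fin d → ℝ) (hp : stdSimplexOpen p) (hq : stdSimplexOpen q) :
    funkDist (fun i => ∑ j ∈ X i, p j) (fun i => ∑ j ∈ X i, q j) ≤ funkDist p q :=
  funkDist_information_monotone_general hne
    ⟨⟨0, hm⟩, Finset.sum_pos (fun j _ => hp.1 j) (hne _)⟩ hq.1
end

section
/- Information monotonicity of the Hilbert simplex distance: let X = {X_1, …, X_m} be a partition of {1, …, d} into m ≤ d nonempty pairwise disjoint subsets, and for p ∈ Δ_d let p_{|X} ∈ Δ_m denote the coarse-grained point with i-th coordinate ∑_{j ∈ X_i} p_j. Then for all p, q ∈ Δ_d, ρ_HG(p_{|X}, q_{|X}) ≤ ρ_HG(p, q). -/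
/-- The Hilbert simplex distance ρ_HG(p,q) = ρ_FD(p,q) + ρ_FD(q,p). -/
noncomputable def hilbertDist {d : ℕ} (p q : Fin d → ℝ) : ℝ :=
  funkDist p q + funkDist q p

/-!
`funkDist p q` is the least `r` with `p ≤ exp r • q` coordinatewise. An order-preserving,
positively homogeneous map `f` carries this inequality to `f p ≤ exp r • f q`, so it cannot
increase the Funk distance in either direction. Coarse-graining is such a map.
-/

/-- The open positive orthant of `ℝ^d`, the cone over the open simplex, on which the Funk and
Hilbert distances make sense without normalization. -/
def positiveOrthant (d : ℕ) : Set (Fin d → ℝ) :=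
  {x | ∀ i, 0 < x i}

theorem smul_mem_positiveOrthant {d : ℕ} {c : ℝ} {x : Fin d → ℝ} (hc : 0 < c)
    (hx : x ∈ positiveOrthant d) : c • x ∈ positiveOrthant d :=
  fun i => mul_pos hc (hx i)

theorem funkDist_le_iff_le_exp_smul {d : ℕ} (hd : 0 < d) {p q : Fin d → ℝ}
    (hp : p ∈ positiveOrthant d) (hq : q ∈ positiveOrthant d) {r : ℝ} :
    funkDist p q ≤ r ↔ p ≤ Real.exp r • q := by
  have : Nonempty (Fin d) := ⟨⟨0, hd⟩⟩
  have hbdd : BddAbove (Set.range fun i => p i / q i) := (Set.finite_range _).bddAbove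
  have hsup : 0 < ⨆ i, p i / q i :=
    (div_pos (hp ⟨0, hd⟩) (hq ⟨0, hd⟩)).trans_le (le_ciSup hbdd ⟨0, hd⟩)
  calc funkDist p q ≤ r
    _ ↔ ⨆ i, p i / q i ≤ Real.exp r := Real.log_le_iff_le_exp hsup
    _ ↔ ∀ i, p i / q i ≤ Real.exp r := ciSup_le_iff hbdd
    _ ↔ p ≤ Real.exp r • q := forall_congr' fun i => div_le_iff₀ (hq i)

theorem le_exp_funkDist_smul {d : ℕ} {p q : Fin d → ℝ} (hp : p ∈ positiveOrthant d)
    (hq : q ∈ positiveOrthant d) : p ≤ Real.exp (funkDist p q) • q :=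
  fun i => (funkDist_le_iff_le_exp_smul i.pos hp hq).1 le_rfl i

section HomogeneousMonotone

variable {d m : ℕ} {f : (Fin d → ℝ) → (Fin m → ℝ)} {p q : Fin d → ℝ}

theorem funkDist_map_le_of_monotoneOn (hm : 0 < m)
    (hpos : Set.MapsTo f (positiveOrthant d) (positiveOrthant m))
    (hmono : MonotoneOn f (positiveOrthant d))
    (hhom : ∀ c : ℝ, 0 < c → ∀ x ∈ positiveOrthant d, f (c • x) = c • f x)
    (hp : p ∈ positiveOrthant d) (hq : q ∈ positiveOrthant d) :
    funkDist (f p) (f q) ≤ funkDist p q := by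
  have hexp : 0 < Real.exp (funkDist p q) := Real.exp_pos _
  refine (funkDist_le_iff_le_exp_smul hm (hpos hp) (hpos hq)).2 ?_
  calc f p ≤ f (Real.exp (funkDist p q) • q) :=
        hmono hp (smul_mem_positiveOrthant hexp hq) (le_exp_funkDist_smul hp hq)
    _ = Real.exp (funkDist p q) • f q := hhom _ hexp q hq

theorem hilbertDist_information_monotone_general (hm : 0 < m)
    (hpos : Set.MapsTo f (positiveOrthant d) (positiveOrthant m))
    (hmono : MonotoneOn f (positiveOrthant d))
    (hhom : ∀ c : ℝ, 0 < c → ∀ x ∈ positiveOrthant d, f (c • x) = c • f x)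
    (hp : p ∈ positiveOrthant d) (hq : q ∈ positiveOrthant d) :
    hilbertDist (f p) (f q) ≤ hilbertDist p q :=
  add_le_add (funkDist_map_le_of_monotoneOn hm hpos hmono hhom hp hq)
    (funkDist_map_le_of_monotoneOn hm hpos hmono hhom hq hp)

end HomogeneousMonotone

/-- Information monotonicity of the Hilbert simplex distance: coarse-graining a point of the
simplex according to a partition `X` of the coordinates into `m ≤ d` nonempty pairwise
disjoint subsets cannot increase the Hilbert distance. -/
theorem hilbertDist_information_monotone {d m : ℕ} (hd : 0 < d) (hm : 0 < m) (hmd : m ≤ d)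
    (X : Fin m → Finset (Fin d))
    (hne : ∀ i, (X i).Nonempty)
    (hdisj : ∀ i j, i ≠ j → Disjoint (X i) (X j))
    (hcover : ∀ k : Fin d, ∃ i, k ∈ X i)
    (p q : Fin d → ℝ) (hp : stdSimplexOpen p) (hq : stdSimplexOpen q) :
    hilbertDist (fun i => ∑ j ∈ X i, p j) (fun i => ∑ j ∈ X i, q j) ≤ hilbertDist p q := by
  exact hilbertDist_information_monotone_general (f := fun x i => ∑ j ∈ X i, x j) hm
    (fun x hx i => Finset.sum_pos (fun j _ => hx j) (hne i))
    (fun x _ y _ hxy i => Finset.sum_le_sum fun j _ => hxy j)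
    (fun c _ x _ => funext fun i => (Finset.mul_sum (X i) x c).symm)
    hp.1 hq.1
end

section
/- For all p, q in the open standard simplex Δ_d, the Hilbert simplex distance equals the variation norm of the difference of geometric-mean-normalized log-representations: ρ_HG(p, q) = ‖(log(p_1/G(p)), …, log(p_d/G(p))) − (log(q_1/G(q)), …, log(q_d/G(q)))‖_var, where G(p) := (∏_{i=1}^d p_i)^{1/d} is the geometric mean of the coordinates of p. -/
/-- The Hilbert projective distance ρ_HG(p,q) = log ( max_i (p_i/q_i) / min_j (p_j/q_j) ). -/
noncomputable def hilbertProjDist {d : ℕ} (p q : Fin d → ℝ) : ℝ :=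
  Real.log ((⨆ i, p i / q i) / (⨅ j, p j / q j))

/-- The variation norm ‖x‖_var = max_i x_i − min_i x_i. -/
noncomputable def varNorm {d : ℕ} (x : Fin d → ℝ) : ℝ :=
  (⨆ i, x i) - (⨅ i, x i)

/-- The geometric mean of the coordinates of `p`. -/
noncomputable def geomMean {d : ℕ} (p : Fin d → ℝ) : ℝ :=
  (∏ i, p i) ^ ((1 : ℝ) / d)

/-! In logarithmic coordinates the ratios `p i / q i` become differences, and the increasing
function `log` commutes with finite maxima and minima, so the Hilbert distance is the variation norm
of `log p - log q`. Dividing `p` and `q` by positive scalars translates this vector by a multiple of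
`(1, …, 1)`, which the variation norm does not see. -/

section FiniteExtrema

variable {ι α β : Type*} [ConditionallyCompleteLinearOrder α]
  [ConditionallyCompleteLinearOrder β] [Finite ι] [Nonempty ι] {g : α → β} {s : Set α} {f : ι → α}

theorem map_ciSup_of_monotoneOn_of_finite (hg : MonotoneOn g s) (hf : ∀ i, f i ∈ s) :
    g (⨆ i, f i) = ⨆ i, g (f i) := by
  obtain ⟨a, ha⟩ := exists_eq_ciSup_of_finite (f := f)
  rw [← ha]
  refine le_antisymm (le_ciSup (Set.finite_range fun i => g (f i)).bddAbove a)
    (ciSup_le fun i => hg (hf i) (hf a) ?_)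
  exact ha ▸ le_ciSup (Set.finite_range f).bddAbove i

theorem map_ciInf_of_monotoneOn_of_finite (hg : MonotoneOn g s) (hf : ∀ i, f i ∈ s) :
    g (⨅ i, f i) = ⨅ i, g (f i) :=
  map_ciSup_of_monotoneOn_of_finite (α := αᵒᵈ) (β := βᵒᵈ) hg.dual hf

end FiniteExtrema

section PositiveVectors

variable {d : ℕ}

theorem geomMean_pos {p : Fin d → ℝ} (hp : ∀ i, 0 < p i) : 0 < geomMean p :=
  Real.rpow_pos_of_pos (Finset.prod_pos fun i _ => hp i) _

theorem varNorm_sub_const [Nonempty (Fin d)] (x : Fin d → ℝ) (c : ℝ) :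
    varNorm (fun i => x i - c) = varNorm x := by
  unfold varNorm
  rw [← ciSup_sub (Set.finite_range x).bddAbove, ← ciInf_sub (Set.finite_range x).bddBelow,
    sub_sub_sub_cancel_right]

theorem log_iSup_div_iInf_eq_varNorm_log [Nonempty (Fin d)] {r : Fin d → ℝ} (hr : ∀ i, 0 < r i) :
    Real.log ((⨆ i, r i) / ⨅ i, r i) = varNorm (fun i => Real.log (r i)) := by
  have sup_pos : 0 < ⨆ i, r i := by
    obtain ⟨a, ha⟩ := exists_eq_ciSup_of_finite (f := r)
    exact ha ▸ hr a
  have inf_pos : 0 < ⨅ i, r i := by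
    obtain ⟨b, hb⟩ := exists_eq_ciInf_of_finite (f := r)
    exact hb ▸ hr b
  rw [Real.log_div sup_pos.ne' inf_pos.ne',
    map_ciSup_of_monotoneOn_of_finite Real.strictMonoOn_log.monotoneOn hr,
    map_ciInf_of_monotoneOn_of_finite Real.strictMonoOn_log.monotoneOn hr, varNorm]

theorem hilbertProjDist_eq_varNorm_log_sub_log [Nonempty (Fin d)] {p q : Fin d → ℝ}
    (hp : ∀ i, 0 < p i) (hq : ∀ i, 0 < q i) :
    hilbertProjDist p q = varNorm (fun i => Real.log (p i) - Real.log (q i)) := by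
  rw [hilbertProjDist, log_iSup_div_iInf_eq_varNorm_log fun i => div_pos (hp i) (hq i)]
  simp only [Real.log_div (hp _).ne' (hq _).ne']

theorem varNorm_log_div_sub_log_div [Nonempty (Fin d)] {p q : Fin d → ℝ} {a b : ℝ}
    (hp : ∀ i, p i ≠ 0) (hq : ∀ i, q i ≠ 0) (ha : a ≠ 0) (hb : b ≠ 0) :
    varNorm (fun i => Real.log (p i / a) - Real.log (q i / b)) =
      varNorm (fun i => Real.log (p i) - Real.log (q i)) := by
  simp only [Real.log_div (hp _) ha, Real.log_div (hq _) hb, sub_sub_sub_comm _ (Real.log a)]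
  exact varNorm_sub_const _ _

theorem hilbertProjDist_eq_varNorm_log_geomMean_general (hd : 0 < d) (p q : Fin d → ℝ)
    (hp : ∀ i, 0 < p i) (hq : ∀ i, 0 < q i) :
    hilbertProjDist p q =
      varNorm ((fun i => Real.log (p i / geomMean p)) -
        (fun i => Real.log (q i / geomMean q))) := by
  have : Nonempty (Fin d) := ⟨⟨0, hd⟩⟩
  rw [hilbertProjDist_eq_varNorm_log_sub_log hp hq]
  exact (varNorm_log_div_sub_log_div (fun i => (hp i).ne') (fun i => (hq i).ne')
    (geomMean_pos hp).ne' (geomMean_pos hq).ne').symm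

end PositiveVectors

/-- The Hilbert simplex distance equals the variation norm of the difference of the
geometric-mean-normalized logarithmic representations. -/
theorem hilbertProjDist_eq_varNorm_log_geomMean {d : ℕ} (hd : 0 < d) (p q : Fin d → ℝ)
    (hp : stdSimplexOpen p) (hq : stdSimplexOpen q) :
    hilbertProjDist p q =
      varNorm ((fun i => Real.log (p i / geomMean p)) -
        (fun i => Real.log (q i / geomMean q))) :=
  hilbertProjDist_eq_varNorm_log_geomMean_general hd p q hp.1 hq.1
end

section
/- Log-sum-exp bounds on the Hilbert simplex distance: for all p, q in the open standard simplex Δ_d, 0 ≤ ρ_HG(p, q) ≤ ρ̃_LSE(p, q) ≤ ρ_HG(p, q) + 2 log d, where ρ̃_LSE(p, q) := log ( (∑_{i=1}^d p_i/q_i) (∑_{i=1}^d q_i/p_i) ). -/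
/-- The symmetrized log-sum-exp pseudo-distance
ρ̃_LSE(p,q) = log ( (∑ i, p_i/q_i) (∑ i, q_i/p_i) ). -/
noncomputable def lseDist {d : ℕ} (p q : Fin d → ℝ) : ℝ :=
  Real.log ((∑ i, p i / q i) * (∑ i, q i / p i))

/-!
The sum of `d` positive numbers lies between their maximum and `d` times their maximum. Hence
replacing the maximum by the sum, in the Funk distance from `p` to `q` and in the one from `q` to
`p`, increases each of them by at least `0` and at most `log d`. Nonnegativity of the Hilbert
distance holds because, at any single coordinate, the two log-ratios are opposite and each is
bounded above by the corresponding Funk distance.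
-/

section FiniteSup

variable {ι : Type*} {f : ι → ℝ}

lemma log_le_log_iSup [Finite ι] {i : ι} (hi : 0 < f i) :
    Real.log (f i) ≤ Real.log (⨆ j, f j) :=
  Real.log_le_log hi (Finite.le_ciSup f i)

lemma iSup_pos_of_forall_pos [Finite ι] [Nonempty ι] (hf : ∀ i, 0 < f i) : 0 < ⨆ i, f i := by
  obtain ⟨i⟩ := ‹Nonempty ι›
  exact (hf i).trans_le (Finite.le_ciSup f i)

variable [Fintype ι]

lemma iSup_le_sum_of_nonneg (hf : ∀ i, 0 ≤ f i) : ⨆ i, f i ≤ ∑ i, f i :=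
  Real.iSup_le
    (fun i ↦ Finset.single_le_sum (fun j _ ↦ hf j) (Finset.mem_univ i))
    (Finset.sum_nonneg fun i _ ↦ hf i)

lemma sum_le_card_mul_iSup (f : ι → ℝ) : ∑ i, f i ≤ Fintype.card ι * ⨆ i, f i := by
  simpa using Finset.sum_le_card_nsmul Finset.univ f _ fun i _ ↦ Finite.le_ciSup f i

variable [Nonempty ι]

lemma log_iSup_le_log_sum (hf : ∀ i, 0 < f i) :
    Real.log (⨆ i, f i) ≤ Real.log (∑ i, f i) :=
  Real.log_le_log (iSup_pos_of_forall_pos hf) (iSup_le_sum_of_nonneg fun i ↦ (hf i).le)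

lemma log_sum_le_log_iSup_add_log_card (hf : ∀ i, 0 < f i) :
    Real.log (∑ i, f i) ≤ Real.log (⨆ i, f i) + Real.log (Fintype.card ι) := by
  have hsum : 0 < ∑ i, f i := Finset.sum_pos (fun i _ ↦ hf i) Finset.univ_nonempty
  have hcard : (Fintype.card ι : ℝ) ≠ 0 := Nat.cast_ne_zero.mpr Fintype.card_ne_zero
  calc Real.log (∑ i, f i)
      ≤ Real.log (Fintype.card ι * ⨆ i, f i) := Real.log_le_log hsum (sum_le_card_mul_iSup f)
    _ = Real.log (⨆ i, f i) + Real.log (Fintype.card ι) := by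
        rw [Real.log_mul hcard (iSup_pos_of_forall_pos hf).ne', add_comm]

end FiniteSup

section HilbertSimplex

variable {d : ℕ} {p q : Fin d → ℝ}

lemma log_sub_log_le_funkDist {i : Fin d} (hp : 0 < p i) (hq : 0 < q i) :
    Real.log (p i) - Real.log (q i) ≤ funkDist p q := by
  rw [← Real.log_div hp.ne' hq.ne']
  exact log_le_log_iSup (f := fun j ↦ p j / q j) (div_pos hp hq)

lemma hilbertDist_nonneg {i : Fin d} (hp : 0 < p i) (hq : 0 < q i) : 0 ≤ hilbertDist p q :=
  calc 0 = (Real.log (p i) - Real.log (q i)) + (Real.log (q i) - Real.log (p i)) := by ring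
    _ ≤ funkDist p q + funkDist q p :=
        add_le_add (log_sub_log_le_funkDist hp hq) (log_sub_log_le_funkDist hq hp)

variable [NeZero d]

lemma lseDist_eq_log_sum_add_log_sum (hp : ∀ i, 0 < p i) (hq : ∀ i, 0 < q i) :
    lseDist p q = Real.log (∑ i, p i / q i) + Real.log (∑ i, q i / p i) :=
  Real.log_mul
    (Finset.sum_pos (fun i _ ↦ div_pos (hp i) (hq i)) Finset.univ_nonempty).ne'
    (Finset.sum_pos (fun i _ ↦ div_pos (hq i) (hp i)) Finset.univ_nonempty).ne'

lemma funkDist_le_log_sum (hp : ∀ i, 0 < p i) (hq : ∀ i, 0 < q i) :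
    funkDist p q ≤ Real.log (∑ i, p i / q i) :=
  log_iSup_le_log_sum fun i ↦ div_pos (hp i) (hq i)

lemma log_sum_le_funkDist_add_log (hp : ∀ i, 0 < p i) (hq : ∀ i, 0 < q i) :
    Real.log (∑ i, p i / q i) ≤ funkDist p q + Real.log d := by
  simpa only [funkDist, Fintype.card_fin] using
    log_sum_le_log_iSup_add_log_card fun i ↦ div_pos (hp i) (hq i)

lemma hilbertDist_le_lseDist (hp : ∀ i, 0 < p i) (hq : ∀ i, 0 < q i) :
    hilbertDist p q ≤ lseDist p q := by
  rw [lseDist_eq_log_sum_add_log_sum hp hq]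
  exact add_le_add (funkDist_le_log_sum hp hq) (funkDist_le_log_sum hq hp)

lemma lseDist_le_hilbertDist_add_two_mul_log (hp : ∀ i, 0 < p i) (hq : ∀ i, 0 < q i) :
    lseDist p q ≤ hilbertDist p q + 2 * Real.log d :=
  calc lseDist p q
      = Real.log (∑ i, p i / q i) + Real.log (∑ i, q i / p i) :=
        lseDist_eq_log_sum_add_log_sum hp hq
    _ ≤ (funkDist p q + Real.log d) + (funkDist q p + Real.log d) :=
        add_le_add (log_sum_le_funkDist_add_log hp hq) (log_sum_le_funkDist_add_log hq hp)
    _ = hilbertDist p q + 2 * Real.log d := by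
        rw [hilbertDist]
        ring

end HilbertSimplex

theorem hilbertDist_lse_bounds_general {d : ℕ} (hd : 0 < d) {p q : Fin d → ℝ}
    (hp : ∀ i, 0 < p i) (hq : ∀ i, 0 < q i) :
    0 ≤ hilbertDist p q ∧
    hilbertDist p q ≤ lseDist p q ∧
    lseDist p q ≤ hilbertDist p q + 2 * Real.log d := by
  have : NeZero d := ⟨hd.ne'⟩
  exact ⟨hilbertDist_nonneg (hp 0) (hq 0), hilbertDist_le_lseDist hp hq,
    lseDist_le_hilbertDist_add_two_mul_log hp hq⟩

/-- Log-sum-exp bounds on the Hilbert simplex distance: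
`0 ≤ ρ_HG(p,q) ≤ ρ̃_LSE(p,q) ≤ ρ_HG(p,q) + 2 log d`. -/
theorem hilbertDist_lse_bounds {d : ℕ} (hd : 0 < d) (p q : Fin d → ℝ)
    (hp : stdSimplexOpen p) (hq : stdSimplexOpen q) :
    0 ≤ hilbertDist p q ∧
    hilbertDist p q ≤ lseDist p q ∧
    lseDist p q ≤ hilbertDist p q + 2 * Real.log d :=
  hilbertDist_lse_bounds_general hd hp.1 hq.1
end

section
/- Straight line segments are geodesics in Hilbert simplex geometry: for all p, q in the open standard simplex Δ_d and every t ∈ [0, 1], the point r := (1 − t)·p + t·q lies in Δ_d and satisfies ρ_HG(p, q) = ρ_HG(p, r) + ρ_HG(r, q). -/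
/-!
For `r = a p + b q` with `a, b ≥ 0`, write `x i = p i / q i`. Then `r i / q i = a (x i) + b` and
`p i / r i = x i / (a (x i) + b)` are both nondecreasing in `x i`, so their suprema are attained
at a common index, and so are their infima. Since `p i / q i = (p i / r i) (r i / q i)`, the
suprema and the infima multiply, and the logarithm turns this into additivity of the distance.
-/

section Monovary

variable {ι α β R : Type*} [Finite ι] [Nonempty ι]

theorem exists_forall_le_and_forall_le_of_monovary [LinearOrder α] [LinearOrder β]
    {f : ι → α} {g : ι → β} (h : Monovary f g) :
    ∃ a, (∀ i, f i ≤ f a) ∧ ∀ i, g i ≤ g a := by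
  obtain ⟨a, ha⟩ := Finite.exists_max fun i => toLex (g i, f i)
  have hg : ∀ i, g i ≤ g a := fun i => Prod.Lex.monotone_fst _ _ (ha i)
  refine ⟨a, fun i => ?_, hg⟩
  rcases Prod.Lex.toLex_le_toLex.1 (ha i) with hlt | ⟨-, hle⟩
  exacts [h hlt, hle]

variable [MulZeroClass R] [ConditionallyCompleteLinearOrder R] [PosMulMono R] [MulPosMono R]
  {f g : ι → R}

theorem iSup_mul_of_monovary (h : Monovary f g) (hf : ∀ i, 0 ≤ f i) (hg : ∀ i, 0 ≤ g i) :
    ⨆ i, f i * g i = (⨆ i, f i) * ⨆ i, g i := by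
  obtain ⟨a, hfa, hga⟩ := exists_forall_le_and_forall_le_of_monovary h
  have iSup_eq {k : ι → R} (hk : ∀ i, k i ≤ k a) : ⨆ i, k i = k a :=
    IsGreatest.csSup_eq ⟨Set.mem_range_self a, Set.forall_mem_range.2 hk⟩
  rw [iSup_eq hfa, iSup_eq hga]
  exact iSup_eq fun i => mul_le_mul (hfa i) (hga i) (hg i) (hf a)

theorem iInf_mul_of_monovary (h : Monovary f g) (hf : ∀ i, 0 ≤ f i) (hg : ∀ i, 0 ≤ g i) :
    ⨅ i, f i * g i = (⨅ i, f i) * ⨅ i, g i := by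
  obtain ⟨a, hfa, hga⟩ := exists_forall_le_and_forall_le_of_monovary h.dual
  have iInf_eq {k : ι → R} (hk : ∀ i, k a ≤ k i) : ⨅ i, k i = k a :=
    IsLeast.csInf_eq ⟨Set.mem_range_self a, Set.forall_mem_range.2 hk⟩
  rw [iInf_eq (k := f) hfa, iInf_eq (k := g) hga]
  exact iInf_eq fun i => mul_le_mul (hfa i) (hga i) (hg a) (hf i)

end Monovary

theorem iSup_div_iInf_pos {ι : Type*} [Finite ι] [Nonempty ι] {f : ι → ℝ} (hf : ∀ i, 0 < f i) :
    0 < (⨆ i, f i) / ⨅ i, f i := by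
  obtain ⟨a, ha⟩ := exists_eq_ciSup_of_finite (f := f)
  obtain ⟨b, hb⟩ := exists_eq_ciInf_of_finite (f := f)
  rw [← ha, ← hb]
  exact div_pos (hf a) (hf b)

theorem monovary_div_smul_add_smul {ι K : Type*} [Field K] [LinearOrder K] [IsStrictOrderedRing K]
    {p q : ι → K} {a b : K} (ha : 0 ≤ a) (hb : 0 ≤ b) (hq : ∀ i, 0 < q i)
    (hr : ∀ i, 0 < (a • p + b • q) i) :
    Monovary (p / (a • p + b • q)) ((a • p + b • q) / q) := by
  intro i j hij
  simp only [Pi.div_apply] at hij ⊢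
  rw [div_lt_div_iff₀ (hq i) (hq j)] at hij
  rw [div_le_div_iff₀ (hr i) (hr j)]
  simp only [Pi.add_apply, Pi.smul_apply, smul_eq_mul] at hij ⊢
  have hpq : 0 < p j * q i - p i * q j :=
    pos_of_mul_pos_right (a := a) (by linarith) ha
  linarith [mul_nonneg hb hpq.le]

section Hilbert

variable {d : ℕ} {p q r : Fin d → ℝ}

theorem convex_setOf_stdSimplexOpen : Convex ℝ {p : Fin d → ℝ | stdSimplexOpen p} := by
  rintro p ⟨hp, hp_sum⟩ q ⟨hq, hq_sum⟩ a b ha hb hab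
  refine ⟨fun i => convex_Ioi (0 : ℝ) (hp i) (hq i) ha hb hab, ?_⟩
  simp only [Pi.add_apply, Pi.smul_apply, smul_eq_mul, Finset.sum_add_distrib, ← Finset.mul_sum,
    hp_sum, hq_sum, mul_one, hab]

theorem hilbertProjDist_eq_add_of_monovary [Nonempty (Fin d)] (hp : ∀ i, 0 < p i)
    (hq : ∀ i, 0 < q i) (hr : ∀ i, 0 < r i) (h : Monovary (p / r) (r / q)) :
    hilbertProjDist p q = hilbertProjDist p r + hilbertProjDist r q := by
  have hpr : ∀ i, 0 < (p / r) i := fun i => div_pos (hp i) (hr i)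
  have hrq : ∀ i, 0 < (r / q) i := fun i => div_pos (hr i) (hq i)
  have hpq : ∀ i, p i / q i = (p / r) i * (r / q) i := fun i =>
    (div_mul_div_cancel₀ (hr i).ne').symm
  calc hilbertProjDist p q
      = Real.log (((⨆ i, (p / r) i) * ⨆ i, (r / q) i) / ((⨅ i, (p / r) i) * ⨅ i, (r / q) i)) := by
        simp only [hilbertProjDist, hpq]
        rw [iSup_mul_of_monovary h (fun i => (hpr i).le) (fun i => (hrq i).le),
          iInf_mul_of_monovary h (fun i => (hpr i).le) (fun i => (hrq i).le)]
    _ = hilbertProjDist p r + hilbertProjDist r q := by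
        rw [mul_div_mul_comm,
          Real.log_mul (iSup_div_iInf_pos hpr).ne' (iSup_div_iInf_pos hrq).ne']
        rfl

theorem hilbertProjDist_segment_geodesic_general (hd : 0 < d) (hp : ∀ i, 0 < p i)
    (hq : ∀ i, 0 < q i) {a b : ℝ} (ha : 0 ≤ a) (hb : 0 ≤ b) (hab : 0 < a + b) :
    hilbertProjDist p q =
      hilbertProjDist p (a • p + b • q) + hilbertProjDist (a • p + b • q) q := by
  have : Nonempty (Fin d) := Fin.pos_iff_nonempty.1 hd
  have hr : ∀ i, 0 < a * p i + b * q i := fun i => by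
    have hpi := hp i
    have hqi := hq i
    rcases ha.eq_or_lt with rfl | ha_pos
    · simpa [hqi] using hab
    · positivity
  exact hilbertProjDist_eq_add_of_monovary hp hq hr (monovary_div_smul_add_smul ha hb hq hr)

end Hilbert

/-- Straight line segments are geodesics in Hilbert simplex geometry: every convex
combination `r = (1−t)p + tq` lies in the open simplex and satisfies
`ρ_HG(p,q) = ρ_HG(p,r) + ρ_HG(r,q)`. -/
theorem hilbertProjDist_segment_geodesic {d : ℕ} (hd : 0 < d) (p q : Fin d → ℝ)
    (hp : stdSimplexOpen p) (hq : stdSimplexOpen q)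
    (t : ℝ) (ht : t ∈ Set.Icc (0 : ℝ) 1) :
    stdSimplexOpen (fun i => (1 - t) * p i + t * q i) ∧
    hilbertProjDist p q =
      hilbertProjDist p (fun i => (1 - t) * p i + t * q i) +
        hilbertProjDist (fun i => (1 - t) * p i + t * q i) q :=
  ⟨convex_setOf_stdSimplexOpen hp hq (sub_nonneg.2 ht.2) ht.1 (sub_add_cancel 1 t),
    hilbertProjDist_segment_geodesic_general hd hp.1 hq.1 (sub_nonneg.2 ht.2) ht.1 (by simp)⟩
end

section
/- Nonexpansiveness of the Hilbert projective distance under positive linear maps: let A be an m × n real matrix with all entries strictly positive, and let p, q ∈ ℝ^n have all coordinates strictly positive. Then A·p and A·q have all coordinates strictly positive and ρ_HG(A·p, A·q) ≤ ρ_HG(p, q). -/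
/-!
Each ratio `(A p)_i / (A q)_i` is a weighted mean of the ratios `p_j / q_j`, with weights
proportional to `A_ij q_j`. Hence `A` can only raise the smallest ratio and lower the largest one.
-/

section Mediant

variable {ι R : Type*} [Fintype ι]

lemma dotProduct_pos_of_pos_of_forall_pos [Semiring R] [PartialOrder R] [IsStrictOrderedRing R]
    {w v : ι → R} (hw : 0 < w) (hv : ∀ j, 0 < v j) : 0 < w ⬝ᵥ v := by
  obtain ⟨hw_nonneg, j, hj⟩ := Pi.lt_def.1 hw
  exact Finset.sum_pos' (fun k _ ↦ mul_nonneg (hw_nonneg k) (hv k).le)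
    ⟨j, Finset.mem_univ j, mul_pos hj (hv j)⟩

variable [Field R] [LinearOrder R] [IsStrictOrderedRing R] {w p q : ι → R} {c : R}

lemma dotProduct_div_dotProduct_le (hw : 0 < w) (hq : ∀ j, 0 < q j) (hc : ∀ j, p j / q j ≤ c) :
    w ⬝ᵥ p / w ⬝ᵥ q ≤ c := by
  have hpq : p ≤ c • q := fun j ↦ (div_le_iff₀ (hq j)).1 (hc j)
  rw [div_le_iff₀ (dotProduct_pos_of_pos_of_forall_pos hw hq)]
  calc
    w ⬝ᵥ p ≤ w ⬝ᵥ (c • q) := dotProduct_le_dotProduct_of_nonneg_left hpq hw.le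
    _ = c * w ⬝ᵥ q := dotProduct_smul c w q

lemma le_dotProduct_div_dotProduct (hw : 0 < w) (hq : ∀ j, 0 < q j) (hc : ∀ j, c ≤ p j / q j) :
    c ≤ w ⬝ᵥ p / w ⬝ᵥ q := by
  have hqp : c • q ≤ p := fun j ↦ (le_div_iff₀ (hq j)).1 (hc j)
  rw [le_div_iff₀ (dotProduct_pos_of_pos_of_forall_pos hw hq)]
  calc
    c * w ⬝ᵥ q = w ⬝ᵥ (c • q) := (dotProduct_smul c w q).symm
    _ ≤ w ⬝ᵥ p := dotProduct_le_dotProduct_of_nonneg_left hqp hw.le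

end Mediant

lemma lt_ciInf_of_finite {ι α : Type*} [Finite ι] [Nonempty ι]
    [ConditionallyCompleteLinearOrder α] {f : ι → α} {a : α} (hf : ∀ i, a < f i) :
    a < ⨅ i, f i := by
  obtain ⟨i, hi⟩ := exists_eq_ciInf_of_finite (f := f)
  exact hi ▸ hf i

lemma hilbertProjDist_le_log_div {d : ℕ} [Nonempty (Fin d)] {p q : Fin d → ℝ} {a b : ℝ}
    (ha : 0 < a) (hle : ∀ i, a ≤ p i / q i) (hge : ∀ i, p i / q i ≤ b) :
    hilbertProjDist p q ≤ Real.log (b / a) := by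
  have hinf : a ≤ ⨅ i, p i / q i := le_ciInf hle
  have hsup : ⨆ i, p i / q i ≤ b := ciSup_le hge
  have hinf_le_sup : ⨅ i, p i / q i ≤ ⨆ i, p i / q i :=
    ciInf_le_ciSup (Finite.bddBelow_range _) (Finite.bddAbove_range _)
  have hinf_pos : 0 < ⨅ i, p i / q i := ha.trans_le hinf
  have hsup_pos : 0 < ⨆ i, p i / q i := hinf_pos.trans_le hinf_le_sup
  exact Real.log_le_log (div_pos hsup_pos hinf_pos)
    (div_le_div₀ (hsup_pos.le.trans hsup) hsup ha hinf)

theorem hilbertProjDist_mulVec_le_general {m n : ℕ} (hm : 0 < m)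
    (A : Matrix (Fin m) (Fin n) ℝ) (hA : ∀ i j, 0 ≤ A i j) (hrow : ∀ i, ∃ j, 0 < A i j)
    (p q : Fin n → ℝ) (hp : ∀ j, 0 < p j) (hq : ∀ j, 0 < q j) :
    (∀ i, 0 < A.mulVec p i) ∧ (∀ i, 0 < A.mulVec q i) ∧
    hilbertProjDist (A.mulVec p) (A.mulVec q) ≤ hilbertProjDist p q := by
  have hw (i : Fin m) : 0 < A i := Pi.lt_def.2 ⟨hA i, hrow i⟩
  have : Nonempty (Fin m) := ⟨⟨0, hm⟩⟩
  have : Nonempty (Fin n) := (hrow ⟨0, hm⟩).nonempty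
  refine ⟨fun i ↦ dotProduct_pos_of_pos_of_forall_pos (hw i) hp,
    fun i ↦ dotProduct_pos_of_pos_of_forall_pos (hw i) hq, hilbertProjDist_le_log_div ?_ ?_ ?_⟩
  · exact lt_ciInf_of_finite fun j ↦ div_pos (hp j) (hq j)
  · exact fun i ↦ le_dotProduct_div_dotProduct (hw i) hq (Finite.ciInf_le _)
  · exact fun i ↦ dotProduct_div_dotProduct_le (hw i) hq (Finite.le_ciSup _)

/-- Nonexpansiveness of the Hilbert projective distance under positive linear maps: if `A`
is an `m × n` matrix with strictly positive entries and `p, q` have strictly positive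
coordinates, then `A·p` and `A·q` have strictly positive coordinates and
`ρ_HG(A·p, A·q) ≤ ρ_HG(p, q)`. -/
theorem hilbertProjDist_mulVec_le {m n : ℕ} (hm : 0 < m) (hn : 0 < n)
    (A : Matrix (Fin m) (Fin n) ℝ) (hA : ∀ i j, 0 < A i j)
    (p q : Fin n → ℝ) (hp : ∀ j, 0 < p j) (hq : ∀ j, 0 < q j) :
    (∀ i, 0 < A.mulVec p i) ∧ (∀ i, 0 < A.mulVec q i) ∧
    hilbertProjDist (A.mulVec p) (A.mulVec q) ≤ hilbertProjDist p q :=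
  hilbertProjDist_mulVec_le_general hm A (fun i j ↦ (hA i j).le) (fun i ↦ ⟨⟨0, hn⟩, hA i _⟩)
    p q hp hq
end

section
/- Geodesics in the Hilbert simplex geometry are not unique: there exist points p, q, r in the open standard simplex Δ_3 such that r does not lie on the straight line segment joining p and q, yet ρ_HG(p, q) = ρ_HG(p, r) + ρ_HG(r, q). -/
/-!
The distance adds up along `p, r, q` as soon as one coordinate maximizes both `p / r` and `r / q`
and one coordinate minimizes both. These conditions only bound the ratios of the coordinates of `r`,
so in dimension two they leave room for `r` to move off the segment.
-/

lemma notMem_segment_of_map_eq_of_map_ne {𝕜 E F : Type*} [Semiring 𝕜] [PartialOrder 𝕜]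
    [AddCommMonoid E] [AddCommMonoid F] [Module 𝕜 E] [Module 𝕜 F] (f : E →ₗ[𝕜] F) {x y z : E}
    (hxy : f x = f y) (hz : f z ≠ f y) : z ∉ segment 𝕜 x y :=
  fun h ↦ hz (((convex_singleton (f y)).linear_preimage f).segment_subset hxy rfl h)

section HilbertProjDist

variable {d : ℕ} {p q r : Fin d → ℝ} {i j : Fin d}

lemma hilbertProjDist_eq_log_of_forall_le (hmax : ∀ k, p k / q k ≤ p i / q i)
    (hmin : ∀ k, p j / q j ≤ p k / q k) :
    hilbertProjDist p q = Real.log ((p i / q i) / (p j / q j)) := by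
  have hsup : ⨆ k, p k / q k = p i / q i :=
    IsGreatest.csSup_eq ⟨Set.mem_range_self i, Set.forall_mem_range.2 hmax⟩
  have hinf : ⨅ k, p k / q k = p j / q j :=
    IsLeast.csInf_eq ⟨Set.mem_range_self j, Set.forall_mem_range.2 hmin⟩
  rw [hilbertProjDist, hsup, hinf]

lemma hilbertProjDist_eq_add_of_forall_le (hp : ∀ k, 0 < p k) (hq : ∀ k, 0 < q k)
    (hr : ∀ k, 0 < r k) (hmax_pr : ∀ k, p k / r k ≤ p i / r i)
    (hmin_pr : ∀ k, p j / r j ≤ p k / r k) (hmax_rq : ∀ k, r k / q k ≤ r i / q i)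
    (hmin_rq : ∀ k, r j / q j ≤ r k / q k) :
    hilbertProjDist p q = hilbertProjDist p r + hilbertProjDist r q := by
  have hpr (k : Fin d) : 0 < p k / r k := div_pos (hp k) (hr k)
  have hrq (k : Fin d) : 0 < r k / q k := div_pos (hr k) (hq k)
  have hmul (k : Fin d) : p k / r k * (r k / q k) = p k / q k :=
    div_mul_div_cancel₀ (hr k).ne'
  have hmax_pq (k : Fin d) : p k / q k ≤ p i / q i := by
    simpa only [hmul] using mul_le_mul (hmax_pr k) (hmax_rq k) (hrq k).le (hpr i).le
  have hmin_pq (k : Fin d) : p j / q j ≤ p k / q k := by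
    simpa only [hmul] using mul_le_mul (hmin_pr k) (hmin_rq k) (hrq j).le (hpr k).le
  rw [hilbertProjDist_eq_log_of_forall_le hmax_pq hmin_pq,
    hilbertProjDist_eq_log_of_forall_le hmax_pr hmin_pr,
    hilbertProjDist_eq_log_of_forall_le hmax_rq hmin_rq,
    ← Real.log_mul (div_pos (hpr i) (hpr j)).ne' (div_pos (hrq i) (hrq j)).ne',
    div_mul_div_comm, hmul, hmul]

end HilbertProjDist

/-- Geodesics in the Hilbert simplex geometry are not unique: there are points `p, q, r` of
the open 2-dimensional simplex with `r` off the straight segment `[p, q]` yet satisfying the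
triangle equality `ρ_HG(p,q) = ρ_HG(p,r) + ρ_HG(r,q)`. -/
theorem hilbertProjDist_geodesic_not_unique :
    ∃ p q r : Fin 3 → ℝ, stdSimplexOpen p ∧ stdSimplexOpen q ∧ stdSimplexOpen r ∧
      r ∉ segment ℝ p q ∧
      hilbertProjDist p q = hilbertProjDist p r + hilbertProjDist r q := by
  let p : Fin 3 → ℝ := ![4 / 7, 1 / 7, 2 / 7]
  let q : Fin 3 → ℝ := ![1 / 3, 1 / 3, 1 / 3]
  let r : Fin 3 → ℝ := ![1 / 2, 1 / 4, 1 / 4]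
  have hp : stdSimplexOpen p := by
    norm_num [stdSimplexOpen, p, Fin.forall_fin_succ, Fin.sum_univ_succ]
  have hq : stdSimplexOpen q := by
    norm_num [stdSimplexOpen, q, Fin.forall_fin_succ, Fin.sum_univ_succ]
  have hr : stdSimplexOpen r := by
    norm_num [stdSimplexOpen, r, Fin.forall_fin_succ, Fin.sum_univ_succ]
  have hr_notMem : r ∉ segment ℝ p q := by
    -- The line through `p` and `q` is `4 x₀ + 5 x₁ = 3` within the plane `x₀ + x₁ + x₂ = 1`.
    apply notMem_segment_of_map_eq_of_map_ne (Fintype.linearCombination ℝ ![(4 : ℝ), 5, 0]) <;>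
      norm_num [p, q, r, Fintype.linearCombination_apply, Fin.sum_univ_succ]
  refine ⟨p, q, r, hp, hq, hr, hr_notMem,
    hilbertProjDist_eq_add_of_forall_le (i := 0) (j := 1) hp.1 hq.1 hr.1 ?_ ?_ ?_ ?_⟩ <;>
    norm_num [p, q, r, Fin.forall_fin_succ]
end
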